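/- For every ε ∈ (0, 1/2) there exists λ₀ = λ₀(a₁, a₂, ε) such that for all integers λ ≥ λ₀, M_{u,λ} := Σ_{n ≥ 1, gcd(n,a₂)=1} ρ_λ(n)/ℓ(n) ≥ (1/2 − ε)·λ·(λ−2)!. In particular, M_{u,λ} ≥ (1/2)·Σ_{p prime, p > |a₂|} (log p)^λ/p² for all positive integers λ. -/

import Mathlib

open scoped BigOperators

/-- `gu u n = gcd(n, u n)`. -/
noncomputable def gu (u : ℕ → ℤ) (n : ℕ) : ℕ := Int.gcd (n : ℤ) (u n)

/-- Rank of appearance of `m` in the sequence `u`. -/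
noncomputable def zu (u : ℕ → ℤ) (m : ℕ) : ℕ := sInf {n : ℕ | 0 < n ∧ (m : ℤ) ∣ u n}

/-- `ℓ(m) = lcm(m, z_u(m))`. -/
noncomputable def ellu (u : ℕ → ℤ) (m : ℕ) : ℕ := Nat.lcm m (zu u m)

/-- The arithmetic function `ρ_λ`. -/
noncomputable def rho (lam n : ℕ) : ℝ :=
  (Nat.factorial lam : ℝ) *
    ∑ f ∈ (Fintype.piFinset fun _ : n.primeFactors => Finset.range (lam + 1)) |>.filter
        (fun f => ∑ p, f p = lam),
      ∏ p : n.primeFactors,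
        (((n.factorization (p : ℕ) : ℝ) ^ f p - ((n.factorization (p : ℕ) : ℝ) - 1) ^ f p) *
          Real.log ((p : ℕ) : ℝ) ^ f p / (Nat.factorial (f p) : ℝ))

/-- The set of primes `≤ x`. -/
noncomputable def primesUpTo (x : ℝ) : Finset ℕ :=
  (Finset.range (⌊x⌋₊ + 1)).filter Nat.Prime

/-- `π(x)`, the number of primes `≤ x`. -/
noncomputable def primePi (x : ℝ) : ℕ := (primesUpTo x).card

/-- `π(x; b, a)`, the number of primes `p ≤ x` with `p ≡ a (mod b)`. -/
noncomputable def primePiMod (x : ℝ) (b a : ℕ) : ℕ :=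
  ((primesUpTo x).filter fun p => p % b = a % b).card

/-- `Δ(x; b, a) = π(x; b, a) - π(x)/φ(b)`. -/
noncomputable def chebErr (x : ℝ) (b a : ℕ) : ℝ :=
  (primePiMod x b a : ℝ) - (primePi x : ℝ) / (Nat.totient b : ℝ)

section lucas

variable {a₁ a₂ : ℤ} {u : ℕ → ℤ}

lemma luc_add (hu0 : u 0 = 0) (hu1 : u 1 = 1)
    (hrec : ∀ n : ℕ, u (n + 2) = a₁ * u (n + 1) + a₂ * u n) (m n : ℕ) :
    u (m + n + 1) = u (m + 1) * u (n + 1) + a₂ * (u m * u n) := by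
  induction n using Nat.strong_induction_on with
  | _ n ih =>
    match n with
    | 0 => simp [hu0, hu1]
    | 1 =>
      have h2 : u 2 = a₁ * u 1 + a₂ * u 0 := hrec 0
      rw [show m + 1 + 1 = m + 2 from rfl, hrec, show (1 + 1 : ℕ) = 2 from rfl, h2, hu0, hu1]
      ring
    | k + 2 =>
      have h1 := ih k (by omega)
      have h2 := ih (k + 1) (by omega)
      rw [show m + (k + 2) + 1 = (m + k + 1) + 2 by ring, hrec,
        show m + k + 1 + 1 = m + (k + 1) + 1 by ring, h1, h2, hrec (k + 1), hrec k]
      ring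

lemma luc_consec (hu1 : u 1 = 1)
    (hrec : ∀ n : ℕ, u (n + 2) = a₁ * u (n + 1) + a₂ * u n) {p : ℕ} (hp : p.Prime)
    (hpa : ¬ (p : ℤ) ∣ a₂) (n : ℕ) : ¬ ((p : ℤ) ∣ u n ∧ (p : ℤ) ∣ u (n + 1)) := by
  have hp' : Prime (p : ℤ) := Nat.prime_iff_prime_int.mp hp
  induction n with
  | zero => 
    rintro ⟨_, h⟩
    rw [zero_add, hu1] at h
    exact hp'.not_dvd_one h
  | succ n ih =>
    rintro ⟨h1, h2⟩
    apply ih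
    refine ⟨?_, h1⟩
    rw [show n + 1 + 1 = n + 2 from rfl, hrec] at h2
    have h3 : (p : ℤ) ∣ a₂ * u n := (dvd_add_right (h1.mul_left a₁)).mp h2
    exact (hp'.dvd_or_dvd h3).resolve_left hpa

lemma luc_shift (hu0 : u 0 = 0) (hu1 : u 1 = 1)
    (hrec : ∀ n : ℕ, u (n + 2) = a₁ * u (n + 1) + a₂ * u n) {p : ℕ} (hp : p.Prime)
    (hpa : ¬ (p : ℤ) ∣ a₂) {z : ℕ} (hz : (p : ℤ) ∣ u z) (j : ℕ) (h : (p : ℤ) ∣ u (z + j)) :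
    (p : ℤ) ∣ u j := by
  have hp' : Prime (p : ℤ) := Nat.prime_iff_prime_int.mp hp
  cases j with
  | zero => simp [hu0]
  | succ k =>
    rw [← add_assoc, luc_add hu0 hu1 hrec] at h
    have h3 : (p : ℤ) ∣ u (z + 1) * u (k + 1) :=
      (dvd_add_left ((hz.mul_right (u k)).mul_left a₂)).mp h
    exact (hp'.dvd_or_dvd h3).resolve_left fun h4 => luc_consec hu1 hrec hp hpa z ⟨hz, h4⟩

lemma zu_spec {m : ℕ} (h : ∃ n, 0 < n ∧ (m : ℤ) ∣ u n) : 0 < zu u m ∧ (m : ℤ) ∣ u (zu u m) :=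
  Nat.sInf_mem (s := {n : ℕ | 0 < n ∧ (m : ℤ) ∣ u n}) h

lemma zu_le {m n : ℕ} (h0 : 0 < n) (h : (m : ℤ) ∣ u n) : zu u m ≤ n :=
  Nat.sInf_le (s := {n : ℕ | 0 < n ∧ (m : ℤ) ∣ u n}) ⟨h0, h⟩

lemma zu_dvd (hu0 : u 0 = 0) (hu1 : u 1 = 1)
    (hrec : ∀ n : ℕ, u (n + 2) = a₁ * u (n + 1) + a₂ * u n) {p : ℕ} (hp : p.Prime)
    (hpa : ¬ (p : ℤ) ∣ a₂) (k : ℕ) (h : (p : ℤ) ∣ u k) : zu u p ∣ k := by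
  induction k using Nat.strong_induction_on with
  | _ k ih =>
    rcases Nat.eq_zero_or_pos k with rfl | hk
    · simp
    obtain ⟨z0, hz⟩ := zu_spec ⟨k, hk, h⟩
    have hle := zu_le hk h
    obtain ⟨j, rfl⟩ := Nat.exists_eq_add_of_le hle
    exact dvd_add (dvd_refl _) (ih j (by omega) (luc_shift hu0 hu1 hrec hp hpa hz j h))

/-- pigeonhole on the projective line -/
lemma zu_exists (hu0 : u 0 = 0) (hu1 : u 1 = 1)
    (hrec : ∀ n : ℕ, u (n + 2) = a₁ * u (n + 1) + a₂ * u n) {p : ℕ} (hp : p.Prime)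
    (hpa : ¬ (p : ℤ) ∣ a₂) : ∃ n, 0 < n ∧ n ≤ p + 1 ∧ (p : ℤ) ∣ u n := by
  have : Fact p.Prime := ⟨hp⟩
  have hp' : Prime (p : ℤ) := Nat.prime_iff_prime_int.mp hp
  by_contra! hcon
  -- ratios `u (n+1) / u n` for `1 ≤ n ≤ p+1`
  let f : ℕ → ZMod p := fun n => (u (n + 1) : ZMod p) / (u n : ZMod p)
  have key : ∃ x ∈ Finset.Icc 1 (p + 1), ∃ y ∈ Finset.Icc 1 (p + 1), x ≠ y ∧ f x = f y := by
    apply Finset.exists_ne_map_eq_of_card_lt_of_maps_to (t := Finset.univ)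
    · simp [ZMod.card]
    · intro x _; simp
  obtain ⟨x, hx, y, hy, hxy, hf⟩ := key
  wlog hlt : x < y generalizing x y
  · exact this y hy x hx hxy.symm hf.symm (by omega)
  rw [Finset.mem_Icc] at hx hy
  have nz : ∀ n, 0 < n → n ≤ p + 1 → (u n : ZMod p) ≠ 0 := fun n h1 h2 h3 =>
    hcon n h1 h2 ((ZMod.intCast_zmod_eq_zero_iff_dvd _ _).mp h3)
  have hx0 := nz x (by omega) hx.2
  have hy0 := nz y (by omega) hy.2
  have hcross : (u (x + 1) : ZMod p) * u y = u (y + 1) * u x := by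
    simp only [f] at hf
    rwa [div_eq_div_iff hx0 hy0] at hf
  -- Casoratian
  have cas : ∀ d n : ℕ, u (n + d + 1) * u n - u (n + 1) * u (n + d) = - (-a₂) ^ n * u d := by
    intro d n
    induction n with
    | zero => simp [hu0, hu1]
    | succ n ih =>
      rw [show n + 1 + d + 1 = n + d + 2 by ring, hrec, show n + 1 + 1 = n + 2 by ring, hrec n,
        show n + 1 + d = n + d + 1 by ring, pow_succ]
      linear_combination (-a₂) * ih
  obtain ⟨d, rfl⟩ := Nat.exists_eq_add_of_le hlt.le
  have h1 := congrArg (Int.cast : ℤ → ZMod p) (cas d x)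
  push_cast at h1
  rw [← hcross] at h1
  have h2 : (-(a₂ : ZMod p)) ^ x * (u d : ZMod p) = 0 := by linear_combination h1
  have h3 : (a₂ : ZMod p) ≠ 0 := fun h => hpa ((ZMod.intCast_zmod_eq_zero_iff_dvd _ _).mp h)
  rcases mul_eq_zero.mp h2 with h | h
  · exact h3 (neg_eq_zero.mp (pow_eq_zero_iff (by omega) |>.mp h))
  · exact nz d (by omega) (by omega) h

lemma zu_prime (hu0 : u 0 = 0) (hu1 : u 1 = 1)
    (hrec : ∀ n : ℕ, u (n + 2) = a₁ * u (n + 1) + a₂ * u n) {p : ℕ} (hp : p.Prime)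
    (hpa : ¬ (p : ℤ) ∣ a₂) : 0 < zu u p ∧ zu u p ≤ p + 1 ∧ (p : ℤ) ∣ u (zu u p) := by
  obtain ⟨n, h0, h1, h2⟩ := zu_exists hu0 hu1 hrec hp hpa
  obtain ⟨h3, h4⟩ := zu_spec ⟨n, h0, h2⟩
  exact ⟨h3, (zu_le h0 h2).trans h1, h4⟩

lemma luc_binet {K : Type*} [Field K] (hu0 : u 0 = 0) (hu1 : u 1 = 1)
    (hrec : ∀ n : ℕ, u (n + 2) = a₁ * u (n + 1) + a₂ * u n) {α β : K}
    (hα : α ^ 2 = (a₁ : K) * α + (a₂ : K)) (hβ : β ^ 2 = (a₁ : K) * β + (a₂ : K)) (n : ℕ) :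
    (u n : K) * (α - β) = α ^ n - β ^ n := by
  induction n using Nat.strong_induction_on with
  | _ n ih =>
    match n with
    | 0 => simp [hu0]
    | 1 => simp [hu1]
    | k + 2 =>
      have h1 := ih k (by omega)
      have h2 := ih (k + 1) (by omega)
      rw [hrec]; push_cast
      linear_combination (a₁ : K) * h2 + (a₂ : K) * h1 - α ^ k * hα + β ^ k * hβ

lemma luc_roots {K : Type*} [Field K] [IsAlgClosed K] (a₁ a₂ : ℤ) : ∃ α β : K,
    α ^ 2 = (a₁ : K) * α + (a₂ : K) ∧ β ^ 2 = (a₁ : K) * β + (a₂ : K) ∧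
    (α - β) ^ 2 = ((a₁ ^ 2 + 4 * a₂ : ℤ) : K) ∧ α * β = - (a₂ : K) := by
  open Polynomial in
  have hd : (X ^ 2 - C (a₁ : K) * X - C (a₂ : K)).degree ≠ 0 := by
    have : (X ^ 2 - C (a₁ : K) * X - C (a₂ : K)).degree = 2 := by compute_degree!
    rw [this]; decide
  obtain ⟨α, hα⟩ := IsAlgClosed.exists_root _ hd
  have hα' : α ^ 2 = (a₁ : K) * α + (a₂ : K) := by
    simp [Polynomial.IsRoot] at hα
    linear_combination hα
  refine ⟨α, a₁ - α, hα', ?_, ?_, ?_⟩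
  · linear_combination hα'
  · push_cast; linear_combination 4 * hα'
  · linear_combination -hα'

lemma luc_ne_zero (ha₂ : a₂ ≠ 0) (hΔ : a₁ ^ 2 + 4 * a₂ ≠ 0) (hu0 : u 0 = 0) (hu1 : u 1 = 1)
    (hrec : ∀ n : ℕ, u (n + 2) = a₁ * u (n + 1) + a₂ * u n)
    (hnd : ∀ α β : ℂ, α ^ 2 = (a₁ : ℂ) * α + (a₂ : ℂ) →
      β ^ 2 = (a₁ : ℂ) * β + (a₂ : ℂ) → α ≠ β → ∀ k : ℕ, 0 < k → (α / β) ^ k ≠ 1)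
    (k : ℕ) (hk : 0 < k) : u k ≠ 0 := by
  intro h
  obtain ⟨α, β, hα, hβ, hd, hm⟩ := luc_roots (K := ℂ) a₁ a₂
  have hne : α ≠ β := by
    rintro rfl
    rw [sub_self] at hd
    apply hΔ
    have : ((a₁ ^ 2 + 4 * a₂ : ℤ) : ℂ) = 0 := by rw [← hd]; norm_num
    exact_mod_cast this
  have hb := luc_binet hu0 hu1 hrec hα hβ k
  have hβ0 : β ≠ 0 := by
    rintro rfl
    rw [mul_zero] at hm
    have : (a₂ : ℂ) = 0 := by linear_combination hm
    exact ha₂ (by exact_mod_cast this)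
  apply hnd α β hα hβ hne k hk
  rw [h, Int.cast_zero, zero_mul] at hb
  rw [div_pow, div_eq_one_iff_eq (pow_ne_zero _ hβ0)]
  linear_combination -hb

lemma luc_disc (hu0 : u 0 = 0) (hu1 : u 1 = 1)
    (hrec : ∀ n : ℕ, u (n + 2) = a₁ * u (n + 1) + a₂ * u n) {p : ℕ} (hp : p.Prime)
    (h : (p : ℤ) ∣ u p) : (p : ℤ) ∣ a₁ ^ 2 + 4 * a₂ := by
  have : Fact p.Prime := ⟨hp⟩
  let K := AlgebraicClosure (ZMod p)
  have : CharP K p := charP_of_injective_algebraMap (algebraMap (ZMod p) K).injective p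
  obtain ⟨α, β, hα, hβ, hd, hm⟩ := luc_roots (K := K) a₁ a₂
  have hb := luc_binet hu0 hu1 hrec hα hβ p
  rw [(CharP.intCast_eq_zero_iff K p _).mpr h, zero_mul, ← sub_pow_char] at hb
  have : α - β = 0 := pow_eq_zero_iff hp.ne_zero |>.mp hb.symm
  rw [this] at hd
  apply (CharP.intCast_eq_zero_iff K p _).mp
  rw [← hd]; norm_num

lemma luc_growth (hu0 : u 0 = 0) (hu1 : u 1 = 1)
    (hrec : ∀ n : ℕ, u (n + 2) = a₁ * u (n + 1) + a₂ * u n) :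
    ∃ C : ℕ, ∀ n, (u n).natAbs ≤ 2 ^ (C * n) := by
  obtain ⟨C, hC⟩ : ∃ C : ℕ, a₁.natAbs + a₂.natAbs ≤ 2 ^ C :=
    ⟨_, Nat.lt_two_pow_self.le⟩
  refine ⟨C, fun n => ?_⟩
  induction n using Nat.strong_induction_on with
  | _ n ih =>
    match n with
    | 0 => simp [hu0]
    | 1 => simp [hu1, Nat.one_le_two_pow]
    | k + 2 =>
      have h1 := ih k (by omega)
      have h2 := ih (k + 1) (by omega)
      have h3 : 2 ^ (C * k) ≤ 2 ^ (C * (k + 1)) := Nat.pow_le_pow_right (by norm_num) (by nlinarith)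
      rw [hrec]
      calc _ ≤ a₁.natAbs * (u (k + 1)).natAbs + a₂.natAbs * (u k).natAbs := by
            refine (Int.natAbs_add_le _ _).trans ?_
            rw [Int.natAbs_mul, Int.natAbs_mul]
        _ ≤ a₁.natAbs * 2 ^ (C * (k + 1)) + a₂.natAbs * 2 ^ (C * (k + 1)) := by
            gcongr; exact h1.trans h3
        _ = (a₁.natAbs + a₂.natAbs) * 2 ^ (C * (k + 1)) := by ring
        _ ≤ 2 ^ C * 2 ^ (C * (k + 1)) := by gcongr
        _ = _ := by rw [← pow_add]; ring_nf

lemma two_pow_card_primeFactors_le {n : ℕ} (hn : n ≠ 0) : 2 ^ n.primeFactors.card ≤ n := by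
  calc 2 ^ n.primeFactors.card ≤ ∏ p ∈ n.primeFactors, p :=
        Finset.pow_card_le_prod _ _ _ fun p hp => (Nat.prime_of_mem_primeFactors hp).two_le
    _ ≤ n := Nat.le_of_dvd (Nat.pos_of_ne_zero hn) (Nat.prod_primeFactors_dvd n)

/-- the number of primes with given rank of appearance is at most linear -/
lemma zu_count (ha₂ : a₂ ≠ 0) (hΔ : a₁ ^ 2 + 4 * a₂ ≠ 0) (hu0 : u 0 = 0) (hu1 : u 1 = 1)
    (hrec : ∀ n : ℕ, u (n + 2) = a₁ * u (n + 1) + a₂ * u n)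
    (hnd : ∀ α β : ℂ, α ^ 2 = (a₁ : ℂ) * α + (a₂ : ℂ) →
      β ^ 2 = (a₁ : ℂ) * β + (a₂ : ℂ) → α ≠ β → ∀ k : ℕ, 0 < k → (α / β) ^ k ≠ 1) :
    ∃ C : ℕ, ∀ (s : Finset ℕ) (k : ℕ), 
      (∀ p ∈ s, p.Prime ∧ ¬ (p : ℤ) ∣ a₂ ∧ zu u p = k) → s.card ≤ C * k := by
  obtain ⟨C, hC⟩ := luc_growth hu0 hu1 hrec
  refine ⟨C, fun s k hs => ?_⟩
  rcases s.eq_empty_or_nonempty with rfl | ⟨q, hq⟩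
  · simp
  have hk : 0 < k := by
    obtain ⟨h1, h2, h3⟩ := hs q hq
    rw [← h3]; exact (zu_prime hu0 hu1 hrec h1 h2).1
  have h0 : (u k).natAbs ≠ 0 :=
    Int.natAbs_ne_zero.mpr (luc_ne_zero ha₂ hΔ hu0 hu1 hrec hnd k hk)
  have hsub : s ⊆ (u k).natAbs.primeFactors := by
    intro p hp
    obtain ⟨h1, h2, h3⟩ := hs p hp
    rw [Nat.mem_primeFactors]
    refine ⟨h1, ?_, h0⟩
    have := (zu_prime hu0 hu1 hrec h1 h2).2.2
    rw [h3] at this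
    exact Int.natCast_dvd.mp this
  have h4 : 2 ^ (u k).natAbs.primeFactors.card ≤ 2 ^ (C * k) :=
    (two_pow_card_primeFactors_le h0).trans (hC k)
  exact (Finset.card_le_card hsub).trans ((Nat.pow_le_pow_iff_right (by norm_num)).mp h4)

end lucas

section rhobounds

lemma rho_factor_bounds {h : ℕ} (hh : 1 ≤ h) (k : ℕ) :
    0 ≤ (h : ℝ) ^ k - ((h : ℝ) - 1) ^ k ∧ (h : ℝ) ^ k - ((h : ℝ) - 1) ^ k ≤ (h : ℝ) ^ k := by
  have h1 : (0 : ℝ) ≤ (h : ℝ) - 1 := by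
    have : (1 : ℝ) ≤ h := by exact_mod_cast hh
    linarith
  constructor
  · have : ((h : ℝ) - 1) ^ k ≤ (h : ℝ) ^ k := by gcongr; linarith
    linarith
  · have := pow_nonneg h1 k
    linarith

lemma rho_nonneg (lam n : ℕ) : 0 ≤ rho lam n := by
  unfold rho
  refine mul_nonneg (by positivity) (Finset.sum_nonneg fun f _ => Finset.prod_nonneg fun p _ => ?_)
  have hp := Nat.mem_primeFactors.mp p.2
  have h1 := (rho_factor_bounds (hp.1.factorization_pos_of_dvd hp.2.2 hp.2.1) (f p)).1
  have h2 : 0 ≤ Real.log ((p : ℕ) : ℝ) := Real.log_natCast_nonneg _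
  positivity

lemma rho_eq_zero (lam n : ℕ) (h : lam < n.primeFactors.card) : rho lam n = 0 := by
  unfold rho
  refine mul_eq_zero_of_right _ (Finset.sum_eq_zero fun f hf => ?_)
  rw [Finset.mem_filter] at hf
  have : ∃ p, f p = 0 := by
    by_contra! hc
    have h1 : ∑ p : n.primeFactors, 1 ≤ ∑ p, f p :=
      Finset.sum_le_sum fun p _ => Nat.one_le_iff_ne_zero.mpr (hc p)
    rw [hf.2] at h1
    simp at h1
    omega
  obtain ⟨p, hp⟩ := this
  refine Finset.prod_eq_zero (Finset.mem_univ p) ?_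
  simp [hp]

lemma rho_one (lam : ℕ) (h : 0 < lam) : rho lam 1 = 0 := by
  unfold rho
  refine mul_eq_zero_of_right _ (Finset.sum_eq_zero fun f hf => ?_)
  rw [Finset.mem_filter] at hf
  have h2 := hf.2
  have : IsEmpty (Nat.primeFactors 1) := ⟨fun x => by
    have hx := Nat.mem_primeFactors.mp x.2
    exact hx.1.one_lt.ne' (Nat.dvd_one.mp hx.2.1)⟩
  rw [Finset.univ_eq_empty, Finset.sum_empty] at h2
  omega

lemma rho_prime (lam p : ℕ) (h : 0 < lam) (hp : p.Prime) : rho lam p = Real.log p ^ lam := by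
  have hpf : p.primeFactors = {p} := hp.primeFactors
  let e : p.primeFactors := ⟨p, by rw [hpf]; simp⟩
  have hval : ∀ x : p.primeFactors, (x : ℕ) = p := fun x =>
    Finset.mem_singleton.mp (hpf ▸ x.2)
  have huniq : Unique p.primeFactors :=
    ⟨⟨e⟩, fun x => Subtype.ext (hval x)⟩
  have hdef : (default : p.primeFactors) = e := by
    exact Subtype.ext (hval _)
  unfold rho
  have hs : ((Fintype.piFinset fun _ : p.primeFactors => Finset.range (lam + 1)).filter
      fun f => ∑ q, f q = lam) = {fun _ => lam} := by
    ext f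
    rw [Finset.mem_filter, Finset.mem_singleton, Fintype.mem_piFinset]
    constructor
    · rintro ⟨_, h2⟩
      rw [Fintype.sum_unique] at h2
      funext x
      rw [Subsingleton.elim x default, h2]
    · rintro rfl
      refine ⟨fun _ => by simp, ?_⟩
      rw [Fintype.sum_unique]
  rw [hs, Finset.sum_singleton, Fintype.prod_unique, hdef]
  simp only [e, hp.factorization_self]
  rw [Nat.cast_one, one_pow, sub_self, zero_pow h.ne']
  field_simp
  simp

lemma rho_le (lam n : ℕ) (hn : n ≠ 0) (h : n.primeFactors.card ≤ lam) :
    rho lam n ≤ (Nat.factorial lam : ℝ) * (lam + 1) ^ lam * Real.log n ^ lam := by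
  unfold rho
  rw [mul_assoc]
  refine mul_le_mul_of_nonneg_left ?_ (by positivity)
  have hL : 0 ≤ Real.log n := Real.log_natCast_nonneg _
  refine (Finset.sum_le_card_nsmul _ _ (Real.log n ^ lam) fun f hf => ?_).trans ?_
  · rw [Finset.mem_filter] at hf
    calc _ ≤ ∏ p : n.primeFactors, Real.log n ^ f p := by
          refine Finset.prod_le_prod (fun p _ => ?_) fun p _ => ?_
          · have hp := Nat.mem_primeFactors.mp p.2
            have h1 := (rho_factor_bounds (hp.1.factorization_pos_of_dvd hp.2.2 hp.2.1) (f p)).1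
            have h2 : 0 ≤ Real.log ((p : ℕ) : ℝ) := Real.log_natCast_nonneg _
            positivity
          · have hp := Nat.mem_primeFactors.mp p.2
            have h1 := (rho_factor_bounds (hp.1.factorization_pos_of_dvd hp.2.2 hp.2.1) (f p))
            have h2 : 0 ≤ Real.log ((p : ℕ) : ℝ) := Real.log_natCast_nonneg _
            have h3 : (n.factorization p : ℝ) * Real.log (p : ℕ) ≤ Real.log n := by
              rw [← Real.log_pow]
              apply Real.log_le_log
              · have := hp.1.pos
                positivity
              · exact_mod_cast Nat.ordProj_le _ hn
            have h4 : (1 : ℝ) ≤ Nat.factorial (f p) := by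
              exact_mod_cast Nat.one_le_iff_ne_zero.mpr (Nat.factorial_ne_zero _)
            calc _ ≤ (n.factorization p : ℝ) ^ f p * Real.log (p : ℕ) ^ f p / 1 := by
                  gcongr
                  exact h1.2
              _ = ((n.factorization p : ℝ) * Real.log (p : ℕ)) ^ f p := by rw [mul_pow, div_one]
              _ ≤ _ := by gcongr
      _ = Real.log n ^ lam := by rw [Finset.prod_pow_eq_pow_sum, hf.2]
  · rw [nsmul_eq_mul]
    gcongr
    have h1 : (((Fintype.piFinset fun _ : n.primeFactors => Finset.range (lam + 1)).filter
      fun f => ∑ q, f q = lam)).card ≤ (lam + 1) ^ lam := by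
      refine (Finset.card_filter_le _ _).trans ?_
      rw [Fintype.card_piFinset]
      simp only [Finset.card_range, Finset.prod_const, Finset.card_univ, Fintype.card_coe]
      exact Nat.pow_le_pow_right (by omega) h
    exact_mod_cast h1

end rhobounds

section decomposition

variable {a₁ a₂ : ℤ} {u : ℕ → ℤ}

lemma ell_decomp (hΔ : a₁ ^ 2 + 4 * a₂ ≠ 0) (hu0 : u 0 = 0) (hu1 : u 1 = 1)
    (hrec : ∀ n : ℕ, u (n + 2) = a₁ * u (n + 1) + a₂ * u n) (n : ℕ) (hn : 1 < n)
    (hna : Int.gcd (n : ℤ) a₂ = 1) :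
    ∃ p d m : ℕ, p.Prime ∧ ¬ (p : ℤ) ∣ a₂ ∧ d ∣ zu u p ∧ 0 < m ∧ n = d * p * m ∧
      m.primeFactors.card ≤ n.primeFactors.card ∧ (∀ q ∈ m.primeFactors, q ≤ p) ∧
      (1 : ℝ) / ellu u n ≤ 2 * ((a₁ ^ 2 + 4 * a₂).natAbs : ℝ) / (zu u p * p * m) := by
  have hne : n.primeFactors.Nonempty := Nat.nonempty_primeFactors.mpr hn
  obtain ⟨p, hpmem, hpmax⟩ : ∃ p ∈ n.primeFactors, ∀ q ∈ n.primeFactors, q ≤ p :=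
    ⟨_, Finset.max'_mem _ hne, fun q hq => Finset.le_max' _ q hq⟩
  obtain ⟨hp, hpn, hn0⟩ := Nat.mem_primeFactors.mp hpmem
  have hpa : ¬ (p : ℤ) ∣ a₂ := by
    intro h
    have h1 : (p : ℤ) ∣ (Int.gcd (n : ℤ) a₂ : ℤ) :=
      Int.dvd_coe_gcd (Int.natCast_dvd_natCast.mpr hpn) h
    rw [hna] at h1
    exact (Nat.prime_iff_prime_int.mp hp).not_dvd_one (by simpa using h1)
  obtain ⟨z0, zle, zdvd⟩ := zu_prime hu0 hu1 hrec hp hpa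
  have hD : 1 ≤ (a₁ ^ 2 + 4 * a₂).natAbs := Nat.one_le_iff_ne_zero.mpr (Int.natAbs_ne_zero.mpr hΔ)
  have hDR : (1 : ℝ) ≤ ((a₁ ^ 2 + 4 * a₂).natAbs : ℝ) := by exact_mod_cast hD
  have hzz : zu u p ∣ zu u n := by
    rcases Nat.eq_zero_or_pos (zu u n) with h | h
    · rw [h]; exact dvd_zero _
    · have hnon : {k : ℕ | 0 < k ∧ (n : ℤ) ∣ u k}.Nonempty := by
        by_contra hc
        rw [Set.not_nonempty_iff_eq_empty] at hc
        simp [zu, hc] at h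
      have := (zu_spec (u := u) (m := n) hnon).2
      exact zu_dvd hu0 hu1 hrec hp hpa _ ((Int.natCast_dvd_natCast.mpr hpn).trans this)
  have hp0 : (0 : ℝ) < p := by exact_mod_cast hp.pos
  have hz0 : (0 : ℝ) < zu u p := by exact_mod_cast z0
  -- generic: lower bound on `ellu` gives the bound
  have key : ∀ m L : ℕ, 0 < m → L ∣ ellu u n → 0 < L → 
      (zu u p * p * m : ℝ) ≤ 2 * ((a₁ ^ 2 + 4 * a₂).natAbs : ℝ) * L →
      (1 : ℝ) / ellu u n ≤ 2 * ((a₁ ^ 2 + 4 * a₂).natAbs : ℝ) / (zu u p * p * m) := by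
    intro m L hm hL hL0 h
    have hm0 : (0 : ℝ) < m := by exact_mod_cast hm
    rcases Nat.eq_zero_or_pos (ellu u n) with h0 | h0
    · rw [h0]; simp; positivity
    · have h1 : (L : ℝ) ≤ ellu u n := by exact_mod_cast Nat.le_of_dvd h0 hL
      have h0' : (0 : ℝ) < ellu u n := by exact_mod_cast h0
      rw [div_le_div_iff₀ h0' (by positivity)]
      nlinarith
  by_cases hpz : p ∣ zu u p
  · have hzp : zu u p = p := by
      obtain ⟨t, ht⟩ := hpz
      have h2 := hp.two_le
      have : t = 1 := by
        rcases t with _ | _ | t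
        · simp at ht; omega
        · rfl
        · exfalso; nlinarith
      rw [ht, this, mul_one]
    obtain ⟨m, hm⟩ := hpn
    have hm0 : 0 < m := Nat.pos_of_ne_zero fun h => hn0 (by rw [hm, h, mul_zero])
    refine ⟨p, 1, m, hp, hpa, one_dvd _, hm0, by rw [hm]; ring, ?_, ?_, ?_⟩
    · exact Finset.card_le_card (Nat.primeFactors_mono ⟨p, by rw [hm]; ring⟩ hn0)
    · intro q hq
      exact hpmax q (Nat.primeFactors_mono ⟨p, by rw [hm]; ring⟩ hn0 hq)
    · refine key m n hm0 (Nat.dvd_lcm_left _ _) (by omega) ?_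
      have hpD : p ≤ (a₁ ^ 2 + 4 * a₂).natAbs := by
        apply Nat.le_of_dvd hD
        rw [hzp] at zdvd
        exact Int.natCast_dvd.mp (luc_disc hu0 hu1 hrec hp zdvd)
      have hpDR : (p : ℝ) ≤ ((a₁ ^ 2 + 4 * a₂).natAbs : ℝ) := by exact_mod_cast hpD
      rw [hzp, show (n : ℝ) = p * m by rw [hm]; push_cast; ring, mul_assoc]
      gcongr
      linarith
  · have hd0 : 0 < Nat.gcd n (zu u p) := Nat.gcd_pos_of_pos_right _ z0
    obtain ⟨n', hn'⟩ := Nat.gcd_dvd_left n (zu u p)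
    have hpn' : p ∣ n' := by
      rw [hn'] at hpn
      exact (hp.dvd_mul.mp hpn).resolve_left fun h => hpz (h.trans (Nat.gcd_dvd_right _ _))
    obtain ⟨m, rfl⟩ := hpn'
    have hm0 : 0 < m := Nat.pos_of_ne_zero fun h => hn0 (by rw [hn', h]; ring)
    have hmn : m ∣ n := by
      rw [hn']; exact (dvd_mul_left m p).mul_left _
    refine ⟨p, Nat.gcd n (zu u p), m, hp, hpa, Nat.gcd_dvd_right _ _, hm0, 
      by rw [mul_assoc]; exact hn', ?_, ?_, ?_⟩
    · exact Finset.card_le_card (Nat.primeFactors_mono hmn hn0)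
    · intro q hq
      exact hpmax q (Nat.primeFactors_mono hmn hn0 hq)
    · have hlcm : Nat.lcm n (zu u p) = p * m * zu u p := by
        have h1 := Nat.gcd_mul_lcm n (zu u p)
        apply Nat.eq_of_mul_eq_mul_left hd0
        rw [h1, ← mul_assoc, ← hn']
      refine key m (Nat.lcm n (zu u p)) hm0 (lcm_dvd_lcm (dvd_refl n) hzz) 
        (Nat.lcm_pos (by omega) z0) ?_
      rw [hlcm]; push_cast
      have : (0 : ℝ) < p * m * zu u p := by positivity
      nlinarith

end decomposition

section analytic

/-- weight on the cofactor -/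
noncomputable def cofW (δ : ℝ) (m : ℕ) : ℝ :=
  if m = 0 then 0 else (m : ℝ) ^ (δ - 1) * ∏ q ∈ m.primeFactors, (q : ℝ) ^ (-(2 * δ))

lemma cofW_nonneg (δ : ℝ) (m : ℕ) : 0 ≤ cofW δ m := by
  unfold cofW
  split_ifs
  · exact le_rfl
  · exact mul_nonneg (by positivity) (Finset.prod_nonneg fun q _ => by positivity)

lemma cofW_one (δ : ℝ) : cofW δ 1 = 1 := by simp [cofW]

lemma cofW_mul (δ : ℝ) {m n : ℕ} (h : Nat.Coprime m n) :
    cofW δ (m * n) = cofW δ m * cofW δ n := by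
  unfold cofW
  by_cases hm : m = 0
  · simp [hm]
  by_cases hn : n = 0
  · simp [hn]
  rw [if_neg hm, if_neg hn, if_neg (mul_ne_zero hm hn), h.primeFactors_mul,
    Finset.prod_union h.disjoint_primeFactors, Nat.cast_mul,
    Real.mul_rpow (by positivity) (by positivity)]
  ring

lemma cofW_prime_pow_succ (δ : ℝ) {p : ℕ} (hp : p.Prime) (h : ℕ) :
    cofW δ (p ^ (h + 1)) = (p : ℝ) ^ (-1 - δ) * ((p : ℝ) ^ (δ - 1)) ^ h := by
  have hp0 : (0 : ℝ) < p := by exact_mod_cast hp.pos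
  unfold cofW
  rw [if_neg (pow_ne_zero _ hp.ne_zero), Nat.primeFactors_prime_pow (by omega) hp,
    Finset.prod_singleton, Nat.cast_pow, ← Real.rpow_natCast, ← Real.rpow_natCast,
    ← Real.rpow_mul hp0.le, ← Real.rpow_mul hp0.le, ← Real.rpow_add hp0, ← Real.rpow_add hp0]
  congr 1
  push_cast
  ring

lemma cofW_ratio {δ : ℝ} (hδ : δ ≤ 1 / 2) {p : ℕ} (hp : p.Prime) :
    0 ≤ (p : ℝ) ^ (δ - 1) ∧ (p : ℝ) ^ (δ - 1) ≤ 3 / 4 := by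
  have hp2 : (2 : ℝ) ≤ p := by exact_mod_cast hp.two_le
  refine ⟨by positivity, ?_⟩
  calc (p : ℝ) ^ (δ - 1) ≤ (p : ℝ) ^ (-(1 / 2) : ℝ) :=
        Real.rpow_le_rpow_of_exponent_le (by linarith) (by linarith)
    _ ≤ (2 : ℝ) ^ (-(1 / 2) : ℝ) :=
        Real.rpow_le_rpow_of_nonpos (by norm_num) hp2 (by norm_num)
    _ = (√2)⁻¹ := by rw [Real.rpow_neg (by norm_num), Real.sqrt_eq_rpow]
    _ ≤ 3 / 4 := by
        rw [inv_le_comm₀ (by positivity) (by norm_num)]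
        apply Real.le_sqrt_of_sq_le
        norm_num

lemma cofW_pp {δ : ℝ} (hδ : δ ≤ 1 / 2) {p : ℕ} (hp : p.Prime) :
    Summable (fun n : ℕ => cofW δ (p ^ n)) ∧
      ∑' n : ℕ, cofW δ (p ^ n) ≤ 1 + 4 * (p : ℝ) ^ (-1 - δ) := by
  obtain ⟨h0, h1⟩ := cofW_ratio hδ hp
  have hg : HasSum (fun h : ℕ => cofW δ (p ^ (h + 1)))
      ((p : ℝ) ^ (-1 - δ) * (1 - (p : ℝ) ^ (δ - 1))⁻¹) := by
    simp_rw [cofW_prime_pow_succ δ hp]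
    exact (hasSum_geometric_of_lt_one h0 (by linarith)).mul_left _
  have hs : Summable (fun n : ℕ => cofW δ (p ^ n)) := (summable_nat_add_iff 1).mp hg.summable
  refine ⟨hs, ?_⟩
  rw [hs.tsum_eq_zero_add, hg.tsum_eq, pow_zero, cofW_one, mul_comm (4 : ℝ)]
  gcongr
  rw [inv_le_comm₀ (by linarith) (by norm_num)]
  linarith

lemma cofW_summable {δ : ℝ} (hδ0 : 0 < δ) (hδ : δ ≤ 1 / 2) : Summable (cofW δ) := by
  have hS : Summable (fun n : ℕ => (n : ℝ) ^ (-1 - δ)) :=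
    Real.summable_nat_rpow.mpr (by linarith)
  refine summable_of_sum_le (c := Real.exp (4 * ∑' n : ℕ, (n : ℝ) ^ (-1 - δ)))
    (cofW_nonneg δ) fun s => ?_
  obtain ⟨N, hN⟩ : ∃ N, ∀ x ∈ s, x < N := ⟨s.sup id + 1, fun x hx =>
    Nat.lt_succ_of_le (Finset.le_sup (f := id) hx)⟩
  have hE := (EulerProduct.summable_and_hasSum_smoothNumbers_prod_primesBelow_tsum
    (f := cofW δ) (cofW_one δ) (cofW_mul δ) (fun {p} hp => by
      simpa [abs_of_nonneg (cofW_nonneg δ _)] using (cofW_pp hδ hp).1) N).2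
  have hE' : HasSum ((N.smoothNumbers).indicator (cofW δ))
      (∏ p ∈ N.primesBelow, ∑' n : ℕ, cofW δ (p ^ n)) := hasSum_subtype_iff_indicator.mp hE
  calc ∑ x ∈ s, cofW δ x = ∑ x ∈ s, (N.smoothNumbers).indicator (cofW δ) x := by
        refine Finset.sum_congr rfl fun x hx => ?_
        rcases Nat.eq_zero_or_pos x with rfl | h
        · have : (0 : ℕ) ∉ N.smoothNumbers := fun h => Nat.ne_zero_of_mem_smoothNumbers h rfl
          rw [Set.indicator_of_notMem this]; simp [cofW]
        · rw [Set.indicator_of_mem (Nat.mem_smoothNumbers_of_lt h (hN x hx))]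
    _ ≤ ∏ p ∈ N.primesBelow, ∑' n : ℕ, cofW δ (p ^ n) :=
        sum_le_hasSum s (fun i _ => Set.indicator_nonneg (fun x _ => cofW_nonneg δ x) i) hE'
    _ ≤ ∏ p ∈ N.primesBelow, Real.exp (4 * (p : ℝ) ^ (-1 - δ)) := by
        refine Finset.prod_le_prod (fun p _ => tsum_nonneg fun n => cofW_nonneg δ _) fun p hp => ?_
        refine (cofW_pp hδ (Nat.prime_of_mem_primesBelow hp)).2.trans ?_
        rw [add_comm]
        exact Real.add_one_le_exp _
    _ = Real.exp (4 * ∑ p ∈ N.primesBelow, (p : ℝ) ^ (-1 - δ)) := by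
        rw [← Real.exp_sum, Finset.mul_sum]
    _ ≤ _ := by
        gcongr
        exact hS.sum_le_tsum _ fun i _ => by positivity

lemma card_divisors_le_sqrt (n : ℕ) : (n.divisors.card : ℝ) ≤ 2 * (n : ℝ) ^ (1 / 2 : ℝ) := by
  have hsub : n.divisors ⊆ Finset.Icc 1 n.sqrt ∪ (Finset.Icc 1 n.sqrt).image (fun x => n / x) := by
    intro d hd
    obtain ⟨⟨e, he⟩, hn⟩ := Nat.mem_divisors.mp hd
    have hd0 : 0 < d := Nat.pos_of_mem_divisors hd
    have he0 : 0 < e := Nat.pos_of_ne_zero fun h => hn (by rw [he, h, mul_zero])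
    rw [Finset.mem_union, Finset.mem_image]
    rcases le_total d e with h | h
    · left
      rw [Finset.mem_Icc]
      exact ⟨hd0, Nat.le_sqrt.mpr (by rw [he]; gcongr)⟩
    · right
      refine ⟨e, ?_, ?_⟩
      · rw [Finset.mem_Icc]
        exact ⟨he0, Nat.le_sqrt.mpr (by rw [he]; gcongr)⟩
      · rw [he]; exact Nat.mul_div_cancel _ he0
  have h1 : n.divisors.card ≤ 2 * n.sqrt := by
    refine (Finset.card_le_card hsub).trans ((Finset.card_union_le _ _).trans ?_)
    have := Finset.card_image_le (s := Finset.Icc 1 n.sqrt) (f := fun x => n / x)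
    simp at this ⊢
    omega
  have h2 : (n.sqrt : ℝ) ≤ (n : ℝ) ^ (1 / 2 : ℝ) := by
    rw [← Real.sqrt_eq_rpow]
    exact Real.nat_sqrt_le_real_sqrt
  have h3 : (n.divisors.card : ℝ) ≤ 2 * n.sqrt := by exact_mod_cast h1
  linarith

/-- abstract summability over primes of the `(p, d)` weight -/
lemma pd_summable (P : ℕ → Prop) (z : ℕ → ℕ) (hz : ∀ p, P p → 0 < z p) (hP : ∀ p, P p → 0 < p)
    (C : ℕ) (hC : ∀ (s : Finset ℕ) (k : ℕ), (∀ p ∈ s, P p ∧ z p = k) → s.card ≤ C * k) :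
    Summable ({x : ℕ × ℕ | P x.1 ∧ x.2 ∣ z x.1}.indicator 
      fun x => (x.1 : ℝ) ^ (-(99 / 100) : ℝ) / (z x.1 : ℝ)) := by
  classical
  -- first the sum of `z p ^ (-2.97)`
  have h1 : Summable ({p | P p}.indicator fun p => (z p : ℝ) ^ (-(297 / 100) : ℝ)) := by
    have hS : Summable (fun n : ℕ => (n : ℝ) ^ (-(197 / 100) : ℝ)) :=
      Real.summable_nat_rpow.mpr (by norm_num)
    refine summable_of_sum_le (c := C * ∑' n : ℕ, (n : ℝ) ^ (-(197 / 100) : ℝ))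
      (fun p => Set.indicator_nonneg (fun x _ => by positivity) p) fun s => ?_
    have e1 : ∑ p ∈ s, {p | P p}.indicator (fun p => (z p : ℝ) ^ (-(297 / 100) : ℝ)) p =
        ∑ p ∈ s.filter P, (z p : ℝ) ^ (-(297 / 100) : ℝ) := by
      rw [Finset.sum_filter]
      rfl
    rw [e1, ← Finset.sum_fiberwise_of_maps_to (g := z) (t := (s.filter P).image z)
      (fun x hx => Finset.mem_image_of_mem z hx)]
    calc _ ≤ ∑ k ∈ (s.filter P).image z, C * (k : ℝ) ^ (-(197 / 100) : ℝ) := by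
          refine Finset.sum_le_sum fun k hk => ?_
          have hk0 : (0 : ℝ) < k := by
            obtain ⟨p, hp, rfl⟩ := Finset.mem_image.mp hk
            exact_mod_cast hz p (Finset.mem_filter.mp hp).2
          have : ∀ p ∈ (s.filter P).filter (fun p => z p = k),
              (z p : ℝ) ^ (-(297 / 100) : ℝ) ≤ (k : ℝ) ^ (-(297 / 100) : ℝ) := by
            intro p hp
            rw [(Finset.mem_filter.mp hp).2]
          refine (Finset.sum_le_card_nsmul _ _ _ this).trans ?_
          rw [nsmul_eq_mul]
          have hc : ((((s.filter P).filter (fun p => z p = k)).card : ℕ) : ℝ) ≤ C * k := by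
            exact_mod_cast hC _ k fun p hp => by
              rw [Finset.mem_filter, Finset.mem_filter] at hp
              exact ⟨hp.1.2, hp.2⟩
          calc _ ≤ (C * k : ℝ) * (k : ℝ) ^ (-(297 / 100) : ℝ) := by gcongr
            _ = C * ((k : ℝ) ^ (1 : ℝ) * (k : ℝ) ^ (-(297 / 100) : ℝ)) := by
                rw [Real.rpow_one]; ring
            _ = _ := by rw [← Real.rpow_add hk0]; norm_num
      _ = C * ∑ k ∈ (s.filter P).image z, (k : ℝ) ^ (-(197 / 100) : ℝ) := by
          rw [Finset.mul_sum]
      _ ≤ _ := by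
          gcongr
          exact hS.sum_le_tsum _ fun i _ => by positivity
  have h2 : Summable (fun n : ℕ => (n : ℝ) ^ (-(11 / 10) : ℝ)) :=
    Real.summable_nat_rpow.mpr (by norm_num)
  have hfin : ∀ p, P p → HasSum (fun d => {x : ℕ × ℕ | P x.1 ∧ x.2 ∣ z x.1}.indicator 
      (fun x => (x.1 : ℝ) ^ (-(99 / 100) : ℝ) / (z x.1 : ℝ)) (p, d))
      ((z p).divisors.card * ((p : ℝ) ^ (-(99 / 100) : ℝ) / (z p : ℝ))) := by
    intro p hp
    have := hasSum_sum_of_ne_finset_zero (L := .unconditional ℕ) (s := (z p).divisors) (f := fun d => 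
      {x : ℕ × ℕ | P x.1 ∧ x.2 ∣ z x.1}.indicator 
      (fun x => (x.1 : ℝ) ^ (-(99 / 100) : ℝ) / (z x.1 : ℝ)) (p, d)) (by
        intro d hd
        apply Set.indicator_of_notMem
        rintro ⟨_, h⟩
        exact hd (Nat.mem_divisors.mpr ⟨h, (hz p hp).ne'⟩))
    convert this using 1
    rw [Finset.sum_congr rfl (g := fun _ => (p : ℝ) ^ (-(99 / 100) : ℝ) / (z p : ℝ))]
    · simp
    · intro d hd
      rw [Set.indicator_of_mem]
      exact ⟨hp, Nat.dvd_of_mem_divisors hd⟩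
  have hnot : ∀ p, ¬ P p → ∀ d, {x : ℕ × ℕ | P x.1 ∧ x.2 ∣ z x.1}.indicator 
      (fun x => (x.1 : ℝ) ^ (-(99 / 100) : ℝ) / (z x.1 : ℝ)) (p, d) = 0 := by
    intro p hp d
    apply Set.indicator_of_notMem
    rintro ⟨h, _⟩
    exact hp h
  have hnn : 0 ≤ ({x : ℕ × ℕ | P x.1 ∧ x.2 ∣ z x.1}.indicator 
      (fun x => (x.1 : ℝ) ^ (-(99 / 100) : ℝ) / (z x.1 : ℝ))) := fun x =>
    Set.indicator_nonneg (fun x _ => by positivity) x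
  rw [summable_prod_of_nonneg hnn]
  refine ⟨fun p => ?_, ?_⟩
  · by_cases hp : P p
    · exact (hfin p hp).summable
    · simp_rw [hnot p hp]; exact summable_zero
  · refine Summable.of_nonneg_of_le (fun p => tsum_nonneg fun d => hnn _) (fun p => ?_)
      ((h2.add h1).mul_left 2)
    by_cases hp : P p
    · rw [(hfin p hp).tsum_eq, Set.indicator_of_mem (show p ∈ {p | P p} from hp)]
      have hz0 : (0 : ℝ) < z p := by exact_mod_cast hz p hp
      have hz1 : (1 : ℝ) ≤ z p := by exact_mod_cast hz p hp
      have hp0 : (0 : ℝ) < p := by exact_mod_cast hP p hp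
      have hp1 : (1 : ℝ) ≤ p := by exact_mod_cast hP p hp
      have e1 : (z p : ℝ) ^ (1 / 2 : ℝ) / z p = (z p : ℝ) ^ (-(1 / 2) : ℝ) := by
        rw [← Real.rpow_sub_one hz0.ne']; norm_num
      calc _ ≤ 2 * (z p : ℝ) ^ (1 / 2 : ℝ) * ((p : ℝ) ^ (-(99 / 100) : ℝ) / (z p : ℝ)) := by
            gcongr; exact card_divisors_le_sqrt _
        _ = 2 * ((p : ℝ) ^ (-(99 / 100) : ℝ) * (z p : ℝ) ^ (-(1 / 2) : ℝ)) := by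
            rw [← e1]; ring
        _ ≤ _ := by
            gcongr
            rcases le_total (p : ℝ) ((z p : ℝ) ^ (3 : ℝ)) with h | h
            · have e2 : (z p : ℝ) ^ (-(1 / 2) : ℝ) ≤ (p : ℝ) ^ (-(1 / 6) : ℝ) := by
                have := Real.rpow_le_rpow_of_nonpos hp0 h (show (-(1 / 6) : ℝ) ≤ 0 by norm_num)
                rw [← Real.rpow_mul hz0.le] at this
                norm_num at this ⊢
                exact this
              calc _ ≤ (p : ℝ) ^ (-(99 / 100) : ℝ) * (p : ℝ) ^ (-(1 / 6) : ℝ) := by gcongr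
                _ = (p : ℝ) ^ (-(99 / 100) + -(1 / 6) : ℝ) := by rw [Real.rpow_add hp0]
                _ ≤ (p : ℝ) ^ (-(11 / 10) : ℝ) :=
                    Real.rpow_le_rpow_of_exponent_le hp1 (by norm_num)
                _ ≤ _ := by
                    have : (0 : ℝ) ≤ (z p : ℝ) ^ (-(297 / 100) : ℝ) := by positivity
                    linarith
            · have e2 : (p : ℝ) ^ (-(99 / 100) : ℝ) ≤ (z p : ℝ) ^ (-(297 / 100) : ℝ) := by
                have := Real.rpow_le_rpow_of_nonpos (by positivity) h
                  (show (-(99 / 100) : ℝ) ≤ 0 by norm_num)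
                rw [← Real.rpow_mul hz0.le] at this
                norm_num at this ⊢
                exact this
              have e3 : (z p : ℝ) ^ (-(1 / 2) : ℝ) ≤ 1 :=
                Real.rpow_le_one_of_one_le_of_nonpos hz1 (by norm_num)
              calc _ ≤ (z p : ℝ) ^ (-(297 / 100) : ℝ) * 1 := by gcongr
                _ ≤ _ := by
                    have : (0 : ℝ) ≤ (p : ℝ) ^ (-(11 / 10) : ℝ) := by positivity
                    linarith
    · simp_rw [hnot p hp]
      rw [tsum_zero]
      have : 0 ≤ {p | P p}.indicator (fun p => (z p : ℝ) ^ (-(297 / 100) : ℝ)) p :=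
        Set.indicator_nonneg (fun x _ => by positivity) p
      positivity

end analytic

section summability

variable {a₁ a₂ : ℤ} {u : ℕ → ℤ}

lemma term_bound (lam : ℕ) (hl : 0 < lam) : ∃ K : ℝ, 0 ≤ K ∧ ∀ (n p d m : ℕ) (z D E : ℝ),
    1 < n → 0 < p → (d : ℝ) ≤ 2 * p → 0 < m → n = d * p * m → 0 < z → 0 ≤ D →
    m.primeFactors.card ≤ n.primeFactors.card → (∀ q ∈ m.primeFactors, q ≤ p) →
    1 / E ≤ 2 * D / (z * p * m) → 
    rho lam n / E ≤ K * D * 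
      ((p : ℝ) ^ (-(99 / 100) : ℝ) / z * cofW (1 / (200 * (lam + 1))) m) := by
  set δ : ℝ := 1 / (200 * (lam + 1)) with hδ
  have hlR : (0 : ℝ) < lam := by exact_mod_cast hl
  have hδ0 : 0 < δ := by positivity
  have hδ1 : δ ≤ 1 := by
    rw [hδ, div_le_one (by positivity)]; linarith
  have hδl : 2 * δ + 2 * δ * lam = 1 / 100 := by rw [hδ]; field_simp; ring
  set K₀ : ℝ := (Nat.factorial lam : ℝ) * (lam + 1) ^ lam with hK₀
  have hK₀0 : 0 ≤ K₀ := by positivity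
  refine ⟨K₀ * (1 / (δ / lam) ^ lam) * 4, by positivity, ?_⟩
  intro n p d m z D E hn hp hd hm hnd hz hD hcard hq hE
  have hp0 : (0 : ℝ) < p := by exact_mod_cast hp
  have hp1 : (1 : ℝ) ≤ p := by exact_mod_cast hp
  have hm0 : (0 : ℝ) < m := by exact_mod_cast hm
  have hn0 : (0 : ℝ) < n := by exact_mod_cast (by omega : 0 < n)
  rcases lt_or_ge lam n.primeFactors.card with h | h
  · rw [rho_eq_zero lam n h, zero_div]
    have := cofW_nonneg δ m
    positivity
  have hlog : Real.log n ^ lam ≤ (1 / (δ / lam) ^ lam) * (n : ℝ) ^ δ := by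
    have h1 : Real.log n ≤ (n : ℝ) ^ (δ / lam) / (δ / lam) :=
      Real.log_le_rpow_div hn0.le (by positivity)
    calc Real.log n ^ lam ≤ ((n : ℝ) ^ (δ / lam) / (δ / lam)) ^ lam := by
          gcongr
      _ = (1 / (δ / lam) ^ lam) * ((n : ℝ) ^ (δ / lam)) ^ lam := by rw [div_pow]; ring
      _ = _ := by
          rw [← Real.rpow_natCast ((n : ℝ) ^ (δ / lam)), ← Real.rpow_mul hn0.le,
            div_mul_cancel₀ _ hlR.ne']
  have hnle : (n : ℝ) ^ δ ≤ 2 * ((p : ℝ) ^ (2 * δ) * (m : ℝ) ^ δ) := by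
    have h1 : (n : ℝ) ≤ 2 * ((p : ℝ) ^ (2 : ℝ) * m) := by
      rw [hnd]; push_cast
      rw [Real.rpow_two]
      calc (d : ℝ) * p * m ≤ 2 * p * p * m := by gcongr
        _ = _ := by ring
    calc (n : ℝ) ^ δ ≤ (2 * ((p : ℝ) ^ (2 : ℝ) * m)) ^ δ := by gcongr
      _ = 2 ^ δ * ((p : ℝ) ^ (2 * δ) * (m : ℝ) ^ δ) := by
          rw [Real.mul_rpow (by norm_num) (by positivity), 
            Real.mul_rpow (by positivity) (by positivity), ← Real.rpow_mul hp0.le]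
      _ ≤ _ := by
          gcongr
          calc (2 : ℝ) ^ δ ≤ 2 ^ (1 : ℝ) := 
                Real.rpow_le_rpow_of_exponent_le (by norm_num) hδ1
            _ = 2 := Real.rpow_one _
  have hcof : (m : ℝ) ^ δ / m ≤ (p : ℝ) ^ (2 * δ * lam) * cofW δ m := by
    have h1 : (p : ℝ) ^ (-(2 * δ * lam)) ≤ ∏ q ∈ m.primeFactors, (q : ℝ) ^ (-(2 * δ)) := by
      calc (p : ℝ) ^ (-(2 * δ * lam)) ≤ (p : ℝ) ^ (-(2 * δ) * (m.primeFactors.card : ℝ)) := by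
            apply Real.rpow_le_rpow_of_exponent_le hp1
            have : (m.primeFactors.card : ℝ) ≤ lam := by exact_mod_cast hcard.trans h
            nlinarith
        _ = ∏ q ∈ m.primeFactors, (p : ℝ) ^ (-(2 * δ)) := by
            rw [Finset.prod_const, Real.rpow_mul hp0.le, Real.rpow_natCast]
        _ ≤ _ := by
            refine Finset.prod_le_prod (fun _ _ => by positivity) fun q hqm => ?_
            apply Real.rpow_le_rpow_of_nonpos
            · exact_mod_cast (Nat.prime_of_mem_primeFactors hqm).pos
            · exact_mod_cast hq q hqm
            · linarith
    unfold cofW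
    rw [if_neg hm.ne', Real.rpow_sub_one hm0.ne']
    calc (m : ℝ) ^ δ / m = (p : ℝ) ^ (2 * δ * lam) * ((m : ℝ) ^ δ / m * (p : ℝ) ^ (-(2 * δ * lam))) := by
          rw [Real.rpow_neg hp0.le]; field_simp
      _ ≤ _ := by gcongr
  have hpp : (p : ℝ) ^ (2 * δ) * (p : ℝ) ^ (2 * δ * lam) / p = (p : ℝ) ^ (-(99 / 100) : ℝ) := by
    rw [← Real.rpow_add hp0, hδl, ← Real.rpow_sub_one hp0.ne']; norm_num
  calc rho lam n / E = rho lam n * (1 / E) := by ring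
    _ ≤ rho lam n * (2 * D / (z * p * m)) := by
        gcongr; exact rho_nonneg _ _
    _ ≤ (K₀ * Real.log n ^ lam) * (2 * D / (z * p * m)) := by
        gcongr; exact rho_le lam n (by omega) h
    _ ≤ (K₀ * ((1 / (δ / lam) ^ lam) * (2 * ((p : ℝ) ^ (2 * δ) * (m : ℝ) ^ δ)))) * 
          (2 * D / (z * p * m)) := by
        gcongr
        exact hlog.trans (by gcongr)
    _ = K₀ * (1 / (δ / lam) ^ lam) * 4 * D * 
          ((p : ℝ) ^ (2 * δ) / p / z * ((m : ℝ) ^ δ / m)) := by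
        field_simp; ring
    _ ≤ K₀ * (1 / (δ / lam) ^ lam) * 4 * D * 
          ((p : ℝ) ^ (2 * δ) / p / z * ((p : ℝ) ^ (2 * δ * lam) * cofW δ m)) := by
        gcongr
    _ = _ := by rw [← hpp]; ring

lemma M_summable (ha₂ : a₂ ≠ 0) (hΔ : a₁ ^ 2 + 4 * a₂ ≠ 0) (hu0 : u 0 = 0) (hu1 : u 1 = 1)
    (hrec : ∀ n : ℕ, u (n + 2) = a₁ * u (n + 1) + a₂ * u n)
    (hnd : ∀ α β : ℂ, α ^ 2 = (a₁ : ℂ) * α + (a₂ : ℂ) →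
      β ^ 2 = (a₁ : ℂ) * β + (a₂ : ℂ) → α ≠ β → ∀ k : ℕ, 0 < k → (α / β) ^ k ≠ 1)
    (lam : ℕ) (hl : 0 < lam) : Summable fun n : ℕ => 
      if 0 < n ∧ Int.gcd (n : ℤ) a₂ = 1 then rho lam n / (ellu u n : ℝ) else 0 := by
  obtain ⟨K, hK, hbound⟩ := term_bound lam hl
  obtain ⟨C, hC⟩ := zu_count ha₂ hΔ hu0 hu1 hrec hnd
  set δ : ℝ := 1 / (200 * (lam + 1)) with hδ
  have hlR : (0 : ℝ) < lam := by exact_mod_cast hl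
  have hδ0 : 0 < δ := by positivity
  have hδ1 : δ ≤ 1 / 2 := by
    rw [hδ, div_le_div_iff₀ (by positivity) (by norm_num)]; linarith
  have hA := pd_summable (fun p => p.Prime ∧ ¬ (p : ℤ) ∣ a₂) (zu u)
    (fun p hp => (zu_prime hu0 hu1 hrec hp.1 hp.2).1) (fun p hp => hp.1.pos) C
    (fun s k h => hC s k fun p hp => ⟨(h p hp).1.1, (h p hp).1.2, (h p hp).2⟩)
  have hG := hA.mul_of_nonneg (cofW_summable hδ0 hδ1)
    (fun x => Set.indicator_nonneg (fun x _ => by positivity) x) (cofW_nonneg δ)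
  set S : Set ℕ := {n | 1 < n ∧ Int.gcd (n : ℤ) a₂ = 1} with hS
  choose fp fd fm h1 h2 h3 h4 h5 h6 h7 h8 using fun n : S =>
    ell_decomp hΔ hu0 hu1 hrec n.1 n.2.1 n.2.2
  have hinj : Function.Injective fun n : S => ((fp n, fd n), fm n) := by
    intro x y hxy
    simp only [Prod.mk.injEq] at hxy
    apply Subtype.ext
    rw [h5 x, h5 y, hxy.1.1, hxy.1.2, hxy.2]
  have hGS := (hG.comp_injective hinj).mul_left (K * ((a₁ ^ 2 + 4 * a₂).natAbs : ℝ))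
  set F : ℕ → ℝ := fun n : ℕ => 
      if 0 < n ∧ Int.gcd (n : ℤ) a₂ = 1 then rho lam n / (ellu u n : ℝ) else 0 with hF
  have hFS : Summable (F ∘ ((↑) : S → ℕ)) := by
    refine Summable.of_nonneg_of_le (fun n => ?_) (fun n => ?_) hGS
    · simp only [hF, Function.comp]
      split_ifs
      · exact div_nonneg (rho_nonneg _ _) (by positivity)
      · exact le_rfl
    · obtain ⟨z0, zle, -⟩ := zu_prime hu0 hu1 hrec (h1 n) (h2 n)
      have hmem : (fp n, fd n) ∈ 
          {x : ℕ × ℕ | (x.1.Prime ∧ ¬ (x.1 : ℤ) ∣ a₂) ∧ x.2 ∣ zu u x.1} :=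
        ⟨⟨h1 n, h2 n⟩, h3 n⟩
      simp only [Function.comp]
      rw [Set.indicator_of_mem hmem]
      simp only [hF]
      rw [if_pos ⟨by have := n.2.1; omega, n.2.2⟩]
      refine hbound n (fp n) (fd n) (fm n) (zu u (fp n)) _ _ n.2.1 (h1 n).pos ?_ (h4 n) (h5 n) 
        (by exact_mod_cast z0) (by positivity) (h6 n) (h7 n) (h8 n)
      have e1 : fd n ≤ 2 * fp n := by
        have := Nat.le_of_dvd z0 (h3 n)
        have := (h1 n).two_le
        omega
      exact_mod_cast e1
  have hind := summable_subtype_iff_indicator.mp hFS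
  have : S.indicator F = F := by
    rw [Set.indicator_eq_self]
    intro n hn
    rw [Function.mem_support] at hn
    simp only [hF] at hn
    rw [ite_ne_right_iff] at hn
    obtain ⟨⟨e1, e2⟩, e3⟩ := hn
    refine ⟨?_, e2⟩
    rcases Nat.lt_or_ge 1 n with h | h
    · exact h
    · exfalso
      have : n = 1 := by omega
      rw [this, rho_one lam hl] at e3
      simp at e3
  rwa [this] at hind

/-- the prime terms -/
lemma prime_term (hu0 : u 0 = 0) (hu1 : u 1 = 1)
    (hrec : ∀ n : ℕ, u (n + 2) = a₁ * u (n + 1) + a₂ * u n) (ha₂ : a₂ ≠ 0)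
    (lam : ℕ) (hl : 0 < lam) (p : ℕ) (hp : p.Prime) (hpa : a₂.natAbs < p) :
    Real.log p ^ lam / (p * (p + 1)) ≤ 
      if 0 < p ∧ Int.gcd (p : ℤ) a₂ = 1 then rho lam p / (ellu u p : ℝ) else 0 := by
  have hnd : ¬ p ∣ a₂.natAbs := fun h => by
    have := Nat.le_of_dvd (Int.natAbs_pos.mpr ha₂) h
    omega
  have hpa' : ¬ (p : ℤ) ∣ a₂ := fun h => hnd (Int.natCast_dvd.mp h)
  have hg : Int.gcd (p : ℤ) a₂ = 1 := by
    have := (Nat.Prime.coprime_iff_not_dvd hp).mpr hnd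
    simpa [Int.gcd] using this
  obtain ⟨z0, zle, -⟩ := zu_prime hu0 hu1 hrec hp hpa'
  rw [if_pos ⟨hp.pos, hg⟩, rho_prime lam p hl hp]
  have e1 : ellu u p ≤ p * (p + 1) := by
    calc ellu u p ≤ p * zu u p := 
          Nat.le_of_dvd (Nat.mul_pos hp.pos z0) (Nat.lcm_dvd_mul _ _)
      _ ≤ _ := by gcongr
  have e2 : 0 < ellu u p := Nat.lcm_pos hp.pos z0
  have e3 : (ellu u p : ℝ) ≤ p * (p + 1) := by exact_mod_cast e1
  have e4 : (0 : ℝ) < ellu u p := by exact_mod_cast e2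
  have := Real.log_natCast_nonneg p
  gcongr

lemma M_ge_half (ha₂ : a₂ ≠ 0) (hΔ : a₁ ^ 2 + 4 * a₂ ≠ 0) (hu0 : u 0 = 0) (hu1 : u 1 = 1)
    (hrec : ∀ n : ℕ, u (n + 2) = a₁ * u (n + 1) + a₂ * u n)
    (hnd : ∀ α β : ℂ, α ^ 2 = (a₁ : ℂ) * α + (a₂ : ℂ) →
      β ^ 2 = (a₁ : ℂ) * β + (a₂ : ℂ) → α ≠ β → ∀ k : ℕ, 0 < k → (α / β) ^ k ≠ 1)
    (lam : ℕ) (hl : 0 < lam) : 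
      (1 / 2 : ℝ) * (∑' q : ℕ, if q.Prime ∧ a₂.natAbs < q then
          Real.log (q : ℝ) ^ lam / (q : ℝ) ^ 2 else 0) ≤
        ∑' n : ℕ, if 0 < n ∧ Int.gcd (n : ℤ) a₂ = 1 then
          rho lam n / (ellu u n : ℝ) else 0 := by
  rw [← tsum_mul_left]
  have hM := M_summable ha₂ hΔ hu0 hu1 hrec hnd lam hl
  have hpt : ∀ q : ℕ, (1 / 2 : ℝ) * (if q.Prime ∧ a₂.natAbs < q then
          Real.log (q : ℝ) ^ lam / (q : ℝ) ^ 2 else 0) ≤ 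
        if 0 < q ∧ Int.gcd (q : ℤ) a₂ = 1 then rho lam q / (ellu u q : ℝ) else 0 := by
    intro q
    by_cases hq : q.Prime ∧ a₂.natAbs < q
    · rw [if_pos hq]
      refine le_trans ?_ (prime_term hu0 hu1 hrec ha₂ lam hl q hq.1 hq.2)
      have hq1 : (1 : ℝ) ≤ q := by exact_mod_cast hq.1.one_lt.le
      have hL := pow_nonneg (Real.log_natCast_nonneg q) lam
      rw [← mul_div_assoc, one_div_mul_eq_div, div_div]
      apply div_le_div_of_nonneg_left hL (by positivity)
      nlinarith
    · rw [if_neg hq, mul_zero]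
      split_ifs
      · exact div_nonneg (rho_nonneg _ _) (by positivity)
      · exact le_rfl
  refine Summable.tsum_le_tsum hpt (Summable.of_nonneg_of_le (fun q => ?_) hpt hM) hM
  split_ifs
  · have := Real.log_natCast_nonneg q
    positivity
  · simp

end summability

section chebyshev

open Filter Topology

lemma theta_lower : ∃ x₀ : ℝ, 1 ≤ x₀ ∧ ∀ x, x₀ ≤ x → (3 / 5) * x ≤ Chebyshev.theta x := by
  have h1 : (fun x : ℝ => Real.log x) =o[atTop] fun x => x ^ (1 / 4 : ℝ) :=
    isLittleO_log_rpow_atTop (by norm_num)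
  have h2 := h1.bound (show (0 : ℝ) < 1 / 100 by norm_num)
  have h3 : ∀ᶠ x : ℝ in atTop, 1000 ≤ x := eventually_ge_atTop 1000
  obtain ⟨x₀, hx₀⟩ := eventually_atTop.mp (h2.and h3)
  refine ⟨max x₀ 1, le_max_right _ _, fun x hx => ?_⟩
  have hxx : x₀ ≤ x := (le_max_left _ _).trans hx
  obtain ⟨h4, h5⟩ := hx₀ x hxx
  have hx0 : (0 : ℝ) < x := by linarith
  have hlog0 : 0 ≤ Real.log x := Real.log_nonneg (by linarith)
  rw [Real.norm_of_nonneg hlog0, Real.norm_of_nonneg (by positivity)] at h4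
  have h6 := Chebyshev.theta_ge' (x := x) (by linarith)
  have h7 : x ^ (1 / 4 : ℝ) ≤ √x := by
    rw [Real.sqrt_eq_rpow]
    exact Real.rpow_le_rpow_of_exponent_le (by linarith) (by norm_num)
  have h8 : √x * √x = x := Real.mul_self_sqrt hx0.le
  have h9 : √x * Real.log x ≤ x / 100 := by
    have : Real.log x ≤ 1 / 100 * √x := by linarith
    calc √x * Real.log x ≤ √x * (1 / 100 * √x) := by gcongr
      _ = (√x * √x) / 100 := by ring
      _ = x / 100 := by rw [h8]
  have h10 : Real.log (x + 2) ≤ x / 50 := by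
    have e1 : Real.log (x + 2) ≤ Real.log (x * x) := Real.log_le_log (by linarith) (by nlinarith)
    rw [Real.log_mul hx0.ne' hx0.ne'] at e1
    have e2 : (1 : ℝ) ≤ √x := Real.one_le_sqrt.mpr (by linarith)
    nlinarith
  have h11 := Real.log_two_gt_d9
  nlinarith

/-- truncated exponential -/
noncomputable def tE (N : ℕ) (v : ℝ) : ℝ := ∑ k ∈ Finset.range (N + 1), v ^ k / (Nat.factorial k : ℝ)

lemma tE_hasDeriv (N : ℕ) (v : ℝ) : HasDerivAt (tE N) (tE N v - v ^ N / (Nat.factorial N : ℝ)) v := by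
  induction N with
  | zero =>
    have : tE 0 = fun _ => (1 : ℝ) := by funext v; simp [tE]
    rw [this]
    simpa using hasDerivAt_const v (1 : ℝ)
  | succ N ih =>
    have e : tE (N + 1) = fun v => tE N v + v ^ (N + 1) / (Nat.factorial (N + 1) : ℝ) := by
      funext v; simp only [tE]; rw [Finset.sum_range_succ _ (N + 1)]
    rw [e]
    have h1 := (hasDerivAt_pow (N + 1) v).div_const (Nat.factorial (N + 1) : ℝ)
    convert! ih.add h1 using 1
    rw [Nat.factorial_succ]
    push_cast
    have : (Nat.factorial N : ℝ) ≠ 0 := by positivity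
    field_simp
    simp
    ring

lemma tE_lower (N : ℕ) (v : ℝ) (hv : 0 ≤ v) :
    Real.exp v - (1 / 2) ^ N * Real.exp (2 * v) ≤ tE N v := by
  have hx : ∀ w : ℝ, HasSum (fun k : ℕ => w ^ k / (Nat.factorial k : ℝ)) (Real.exp w) := by
    intro w
    rw [Real.exp_eq_exp_ℝ]
    exact NormedSpace.expSeries_div_hasSum_exp w
  have h1 := hx v
  have h2 := (hx (2 * v)).mul_left ((1 / 2 : ℝ) ^ N)
  have h3 : HasSum (fun k : ℕ => if k ∈ Finset.range (N + 1) then v ^ k / (Nat.factorial k : ℝ) else 0)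
      (tE N v) := by
    have := hasSum_sum_of_ne_finset_zero (L := .unconditional ℕ) (s := Finset.range (N + 1))
      (f := fun k : ℕ => if k ∈ Finset.range (N + 1) then v ^ k / (Nat.factorial k : ℝ) else 0)
      (fun k hk => if_neg hk)
    convert! this using 1
    unfold tE
    exact Finset.sum_congr rfl fun k hk => (if_pos hk).symm
  have := hasSum_le (fun k => ?_) h1 (h3.add h2)
  · linarith
  · have hnn : 0 ≤ (1 / 2 : ℝ) ^ N * ((2 * v) ^ k / (Nat.factorial k : ℝ)) := by positivity
    split_ifs with hk
    · linarith
    · rw [Finset.mem_range, not_lt] at hk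
      rw [zero_add, mul_pow, mul_div_assoc, ← mul_assoc]
      have e : (1 : ℝ) ≤ (1 / 2) ^ N * 2 ^ k := by
        calc (1 : ℝ) = (1 / 2) ^ N * 2 ^ N := by rw [← mul_pow]; norm_num
          _ ≤ _ := by
            gcongr
            · norm_num
            · omega
      have : 0 ≤ v ^ k / (Nat.factorial k : ℝ) := by positivity
      nlinarith

lemma pow_le_fact_exp (N : ℕ) (v : ℝ) (hv : 0 ≤ v) :
    v ^ N ≤ (Nat.factorial N : ℝ) * ((1 / 2) ^ N * Real.exp (2 * v)) := by
  have h := Real.pow_div_factorial_le_exp (2 * v) (by positivity) N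
  rw [div_le_iff₀ (by positivity), mul_pow] at h
  calc v ^ N = (1 / 2) ^ N * (2 ^ N * v ^ N) := by rw [← mul_assoc, ← mul_pow]; norm_num
    _ ≤ (1 / 2) ^ N * (Real.exp (2 * v) * (Nat.factorial N : ℝ)) := by gcongr
    _ = _ := by ring

lemma tE_tendsto (N : ℕ) : Tendsto (fun v => tE N v * Real.exp (-v)) atTop (𝓝 0) := by
  have : (fun v => tE N v * Real.exp (-v)) = fun v => ∑ k ∈ Finset.range (N + 1),
      (1 / (Nat.factorial k : ℝ)) * (v ^ k * Real.exp (-v)) := by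
    funext v
    unfold tE
    rw [Finset.sum_mul]
    exact Finset.sum_congr rfl fun k _ => by ring
  rw [this]
  have h0 : (0 : ℝ) = ∑ k ∈ Finset.range (N + 1), (1 / (Nat.factorial k : ℝ)) * 0 := by simp
  rw [h0]
  exact tendsto_finsetSum _ fun k _ =>
    (Real.tendsto_pow_mul_exp_neg_atTop_nhds_zero k).const_mul _

/-- Abel summation against `(log t)^N / t^2`. -/
lemma abel_lower (N : ℕ) (hN : 1 ≤ N) (Y X : ℝ) (hY1 : 1 ≤ Y) (hYX : Y ≤ X)
    (hYN : (N : ℝ) / 2 ≤ Real.log Y) (hth : ∀ x, Y ≤ x → (3 / 5) * x ≤ Chebyshev.theta x) :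
    (3 / 5) * ((Nat.factorial N : ℝ) * tE N (Real.log Y) / Y
      - (Nat.factorial N : ℝ) * tE N (Real.log X) / X) - Real.log 4 * (Real.log Y ^ N / Y) ≤
    ∑ k ∈ Finset.Ioc ⌊Y⌋₊ ⌊X⌋₊, Real.log (k : ℝ) ^ N / (k : ℝ) ^ 2 *
      (if k.Prime then Real.log (k : ℝ) else 0) := by
  set f : ℝ → ℝ := fun t => Real.log t ^ N / t ^ 2 with hf
  set c : ℕ → ℝ := fun k => if k.Prime then Real.log (k : ℝ) else 0 with hc
  set f' : ℝ → ℝ := fun t => Real.log t ^ (N - 1) * (N - 2 * Real.log t) / t ^ 3 with hf'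
  have hder : ∀ t, 0 < t → HasDerivAt f (f' t) t := by
    intro t ht
    have h1 := ((Real.hasDerivAt_log ht.ne').pow N).div (hasDerivAt_pow 2 t) (by positivity)
    convert! h1 using 1
    simp only [hf']
    obtain ⟨M, rfl⟩ : ∃ M, N = M + 1 := ⟨N - 1, by omega⟩
    simp only [Nat.add_sub_cancel, Pi.pow_apply]
    push_cast
    field_simp
    ring
  have hpos : ∀ t ∈ Set.Icc Y X, 0 < t := fun t ht => by linarith [ht.1]
  have hdf : ∀ t ∈ Set.Icc Y X, deriv f t = f' t := fun t ht => (hder t (hpos t ht)).deriv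
  have hf'c : ContinuousOn f' (Set.Icc Y X) := by
    intro t ht
    have ht0 := hpos t ht
    apply ContinuousAt.continuousWithinAt
    simp only [hf']
    have hl : ContinuousAt Real.log t := Real.continuousAt_log ht0.ne'
    exact ((hl.pow _).mul (continuousAt_const.sub (continuousAt_const.mul hl))).div
      (continuousAt_id.pow 3) (by positivity)
  have hdc : ContinuousOn (deriv f) (Set.Icc Y X) := hf'c.congr hdf
  have hderivInt : MeasureTheory.IntegrableOn (deriv f) (Set.Icc Y X) := hdc.integrableOn_Icc
  have hθ : ∀ t : ℝ, ∑ k ∈ Finset.Icc 0 ⌊t⌋₊, c k = Chebyshev.theta t := by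
    intro t
    rw [Chebyshev.theta_eq_sum_Icc, Finset.sum_filter]
  have habel := sum_mul_eq_sub_sub_integral_mul c (by linarith : 0 ≤ Y) hYX
    (fun t ht => (hder t (hpos t ht)).differentiableAt) hderivInt
  have hfcInt := integrableOn_mul_sum_Icc (m := 0) c (by linarith : 0 ≤ Y) hderivInt
  simp only [hθ] at habel hfcInt
  change _ ≤ ∑ k ∈ Finset.Ioc ⌊Y⌋₊ ⌊X⌋₊, f k * c k
  rw [habel]
  -- antiderivative of `-(t f')`
  set G : ℝ → ℝ := fun t => -(t * f t + (Nat.factorial N : ℝ) * tE N (Real.log t) / t) with hG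
  have hGder : ∀ t ∈ Set.uIcc Y X, HasDerivAt G (-(f' t * t)) t := by
    intro t ht
    rw [Set.uIcc_of_le hYX] at ht
    have ht0 := hpos t ht
    have h1 := (hasDerivAt_id t).mul (hder t ht0)
    have h2 := (((tE_hasDeriv N (Real.log t)).comp t (Real.hasDerivAt_log ht0.ne')).const_mul 
      (Nat.factorial N : ℝ)).div (hasDerivAt_id t) ht0.ne'
    have h3 := (h1.add h2).neg
    convert! h3 using 1
    simp only [hf, id, Function.comp]
    have : (Nat.factorial N : ℝ) ≠ 0 := by positivity
    field_simp
    ring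
  have hcont : ContinuousOn (fun t => -(f' t * t)) (Set.Icc Y X) :=
    (hf'c.mul continuousOn_id).neg
  have hFTC : ∫ t in Y..X, -(f' t * t) = G X - G Y := by
    apply intervalIntegral.integral_eq_sub_of_hasDerivAt hGder
    apply ContinuousOn.intervalIntegrable
    rwa [Set.uIcc_of_le hYX]
  rw [intervalIntegral.integral_of_le hYX] at hFTC
  have hmono : ∫ t in Set.Ioc Y X, deriv f t * Chebyshev.theta t ≤
      ∫ t in Set.Ioc Y X, -(3 / 5) * (-(f' t * t)) := by
    apply MeasureTheory.setIntegral_mono_on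
    · exact hfcInt.mono_set Set.Ioc_subset_Icc_self
    · exact (hcont.integrableOn_Icc.mono_set Set.Ioc_subset_Icc_self).const_mul _
    · exact measurableSet_Ioc
    · intro t ht
      have ht' : t ∈ Set.Icc Y X := Set.Ioc_subset_Icc_self ht
      have ht0 := hpos t ht'
      rw [hdf t ht']
      have h1 := hth t ht'.1
      have hlog : Real.log Y ≤ Real.log t := Real.log_le_log (by linarith) ht'.1
      have hlog0 : 0 ≤ Real.log t := Real.log_nonneg (by linarith [ht'.1])
      have h2 : f' t ≤ 0 := by
        simp only [hf']
        apply div_nonpos_of_nonpos_of_nonneg _ (by positivity)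
        apply mul_nonpos_of_nonneg_of_nonpos (by positivity)
        linarith
      nlinarith
  rw [MeasureTheory.integral_const_mul, hFTC] at hmono
  have hYpos : 0 < Y := by linarith
  have hXpos : 0 < X := by linarith
  have hlX : 0 ≤ Real.log X := Real.log_nonneg (by linarith)
  have hlY : 0 ≤ Real.log Y := Real.log_nonneg hY1
  have hfX : 0 ≤ f X := by simp only [hf]; positivity
  have hfY : 0 ≤ f Y := by simp only [hf]; positivity
  have e1 : f X * ((3 / 5) * X) ≤ f X * Chebyshev.theta X := by gcongr; exact hth X hYX
  have e2 : f Y * Chebyshev.theta Y ≤ f Y * (Real.log 4 * Y) := by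
    gcongr; exact Chebyshev.theta_le_log4_mul_x hYpos.le
  have e3 : f Y * Y = Real.log Y ^ N / Y := by simp only [hf]; field_simp
  rw [← e3]
  simp only [hG] at hmono
  have e4 : 0 ≤ f Y * Y := by positivity
  linarith

lemma prime_sum_lower (A : ℝ) : ∃ N₀ : ℕ, ∀ N : ℕ, N₀ ≤ N → ∃ (a b : ℕ), A ≤ a ∧
    (58 / 100 : ℝ) * (Nat.factorial N : ℝ) ≤
    ∑ k ∈ Finset.Ioc a b, Real.log (k : ℝ) ^ N / (k : ℝ) ^ 2 *
      (if k.Prime then Real.log (k : ℝ) else 0) := by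
  obtain ⟨x₀, hx₀1, hx₀⟩ := theta_lower
  set r : ℝ := 1 / 2 * Real.exp (1 / 2) with hr
  have hr0 : 0 ≤ r := by positivity
  have hr1 : r < 1 := by
    have h1 : Real.exp (1 / 2) ^ 2 = Real.exp 1 := by
      rw [← Real.exp_nat_mul]; norm_num
    have h2 := Real.exp_one_lt_d9
    have h3 : Real.exp (1 / 2) < 2 := by
      by_contra! h
      nlinarith
    rw [hr]; linarith
  have hrt := (tendsto_pow_atTop_nhds_zero_of_lt_one hr0 hr1).eventually_le_const
    (show (0 : ℝ) < 1 / 200 by norm_num)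
  have hYt : Tendsto (fun N : ℕ => Real.exp ((N : ℝ) / 2)) atTop atTop :=
    Real.tendsto_exp_atTop.comp (tendsto_natCast_atTop_atTop.atTop_div_const (by norm_num))
  have hY1 := hYt.eventually_ge_atTop (max x₀ (A + 1))
  obtain ⟨N₀, hN₀⟩ := eventually_atTop.mp ((hrt.and hY1).and (eventually_ge_atTop 1))
  refine ⟨N₀, fun N hN => ?_⟩
  obtain ⟨⟨h1, h2⟩, h3⟩ := hN₀ N hN
  set Y := Real.exp ((N : ℝ) / 2) with hY
  have hYx : x₀ ≤ Y := (le_max_left _ _).trans h2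
  have hYA : A + 1 ≤ Y := (le_max_right _ _).trans h2
  have hlogY : Real.log Y = (N : ℝ) / 2 := Real.log_exp _
  -- choose X
  obtain ⟨V, hV1, hV2⟩ := ((((tE_tendsto N).eventually_le_const
    (show (0 : ℝ) < 1 / 200 by norm_num))).and (eventually_ge_atTop ((N : ℝ) / 2))).exists
  refine ⟨⌊Y⌋₊, ⌊Real.exp V⌋₊, ?_, ?_⟩
  · have := Nat.lt_floor_add_one Y
    linarith
  · refine le_trans ?_ (abel_lower N h3 Y (Real.exp V) (by linarith) (Real.exp_le_exp.mpr hV2)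
      hlogY.ge (fun x hx => hx₀ x (hYx.trans hx)))
    rw [hlogY, Real.log_exp]
    have hv0 : (0 : ℝ) ≤ (N : ℝ) / 2 := by positivity
    have hYpos : 0 < Y := Real.exp_pos _
    have hrN : (1 / 2 : ℝ) ^ N * Real.exp (2 * ((N : ℝ) / 2)) = r ^ N * Y := by
      rw [hr, mul_pow, mul_assoc, ← Real.exp_nat_mul, hY, ← Real.exp_add]
      congr 2; ring
    have k1 := tE_lower N _ hv0
    have k2 := pow_le_fact_exp N _ hv0
    rw [hrN] at k1 k2
    rw [← hY] at k1
    set fN : ℝ := (Nat.factorial N : ℝ) with hfN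
    have hf0 : 0 < fN := by positivity
    have m1 : fN * (1 - r ^ N) ≤ fN * tE N ((N : ℝ) / 2) / Y := by
      rw [le_div_iff₀ hYpos]
      calc fN * (1 - r ^ N) * Y = fN * (Y - r ^ N * Y) := by ring
        _ ≤ _ := by gcongr
    have m2 : ((N : ℝ) / 2) ^ N / Y ≤ fN * r ^ N := by
      rw [div_le_iff₀ hYpos]; linarith
    have m3 : fN * tE N V / Real.exp V ≤ fN * (1 / 200) := by
      calc fN * tE N V / Real.exp V = fN * (tE N V * Real.exp (-V)) := by
            rw [Real.exp_neg]; ring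
        _ ≤ _ := by gcongr
    have m4 : Real.log 4 ≤ 1.4 := by
      have : Real.log 4 = 2 * Real.log 2 := by
        rw [show (4 : ℝ) = 2 ^ 2 by norm_num, Real.log_pow]; norm_num
      rw [this]
      linarith [Real.log_two_lt_d9]
    have m5 : fN * r ^ N ≤ fN * (1 / 200) := by gcongr
    have m6 : Real.log 4 * (((N : ℝ) / 2) ^ N / Y) ≤ 1.4 * (fN * r ^ N) := by gcongr
    norm_num at m6 ⊢
    linarith

end chebyshev


lemma M_large {a₁ a₂ : ℤ} {u : ℕ → ℤ} (ha₂ : a₂ ≠ 0) (hΔ : a₁ ^ 2 + 4 * a₂ ≠ 0) (hu0 : u 0 = 0) (hu1 : u 1 = 1)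
    (hrec : ∀ n : ℕ, u (n + 2) = a₁ * u (n + 1) + a₂ * u n)
    (hnd : ∀ α β : ℂ, α ^ 2 = (a₁ : ℂ) * α + (a₂ : ℂ) →
      β ^ 2 = (a₁ : ℂ) * β + (a₂ : ℂ) → α ≠ β → ∀ k : ℕ, 0 < k → (α / β) ^ k ≠ 1)
    (ε : ℝ) (hε : 0 < ε) : ∃ lam₀ : ℕ, ∀ lam : ℕ, lam₀ ≤ lam →
      (1 / 2 - ε) * (lam : ℝ) * (Nat.factorial (lam - 2) : ℝ) ≤
        ∑' n : ℕ, if 0 < n ∧ Int.gcd (n : ℤ) a₂ = 1 then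
          rho lam n / (ellu u n : ℝ) else 0 := by
  obtain ⟨N₀, hN₀⟩ := prime_sum_lower ((a₂.natAbs + 19 : ℕ) : ℝ)
  refine ⟨max N₀ 10 + 2, fun lam hlam => ?_⟩
  obtain ⟨n, rfl⟩ : ∃ n, lam = n + 2 := ⟨lam - 2, by omega⟩
  have hn1 : N₀ ≤ n + 1 := by omega
  have hn2 : 10 ≤ n := by omega
  obtain ⟨a, b, ha, hS⟩ := hN₀ (n + 1) hn1
  have ha' : a₂.natAbs + 19 ≤ a := by exact_mod_cast ha
  have hM := M_summable ha₂ hΔ hu0 hu1 hrec hnd (n + 2) (by omega)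
  have hnn : ∀ k : ℕ, 0 ≤ if 0 < k ∧ Int.gcd (k : ℤ) a₂ = 1 then
      rho (n + 2) k / (ellu u k : ℝ) else 0 := by
    intro k
    split_ifs
    · exact div_nonneg (rho_nonneg _ _) (by positivity)
    · exact le_rfl
  have h1 := hM.sum_le_tsum (Finset.Ioc a b) (fun k _ => hnn k)
  refine le_trans ?_ h1
  have h2 : (95 / 100 : ℝ) * ∑ k ∈ Finset.Ioc a b, Real.log (k : ℝ) ^ (n + 1) / (k : ℝ) ^ 2 *
      (if k.Prime then Real.log (k : ℝ) else 0) ≤ ∑ k ∈ Finset.Ioc a b,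
      if 0 < k ∧ Int.gcd (k : ℤ) a₂ = 1 then rho (n + 2) k / (ellu u k : ℝ) else 0 := by
    rw [Finset.mul_sum]
    refine Finset.sum_le_sum fun k hk => ?_
    have hka := (Finset.mem_Ioc.mp hk).1
    by_cases hp : k.Prime
    · rw [if_pos hp]
      refine le_trans ?_ (prime_term hu0 hu1 hrec ha₂ (n + 2) (by omega) k hp (by omega))
      have hk19 : (19 : ℝ) ≤ k := by exact_mod_cast (by omega : 19 ≤ k)
      have hL := pow_nonneg (Real.log_natCast_nonneg k) (n + 2)
      have e : (95 / 100 : ℝ) * (Real.log (k : ℝ) ^ (n + 1) / (k : ℝ) ^ 2 * Real.log (k : ℝ)) =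
          Real.log (k : ℝ) ^ (n + 2) / ((100 / 95) * (k : ℝ) ^ 2) := by
        have : (k : ℝ) ≠ 0 := by positivity
        field_simp
        norm_num
        ring
      rw [e]
      apply div_le_div_of_nonneg_left hL (by positivity)
      nlinarith
    · rw [if_neg hp, mul_zero, mul_zero]
      exact hnn k
  refine le_trans ?_ h2
  have h3 := mul_le_mul_of_nonneg_left hS (by norm_num : (0 : ℝ) ≤ 95 / 100)
  refine le_trans ?_ h3
  rw [Nat.add_sub_cancel, Nat.factorial_succ]
  push_cast
  have hf : (0 : ℝ) < (Nat.factorial n : ℝ) := by positivity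
  have hnR : (10 : ℝ) ≤ n := by exact_mod_cast hn2
  have : (1 / 2 - ε) * ((n : ℝ) + 2) ≤ 95 / 100 * (58 / 100) * ((n : ℝ) + 1) := by nlinarith
  nlinarith [mul_le_mul_of_nonneg_right this hf.le]

/-- For every `ε ∈ (0, 1/2)` there is `λ₀` such that for all `λ ≥ λ₀`,
`M_{u,λ} ≥ (1/2 − ε)·λ·(λ−2)!`; and for every positive integer `λ`,
`M_{u,λ} ≥ (1/2)·Σ_{p prime, p > |a₂|} (log p)^λ/p²`. -/
theorem statement18 (a₁ a₂ : ℤ) (hcop : IsCoprime a₁ a₂) (ha₂ : a₂ ≠ 0)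
    (hΔ : a₁ ^ 2 + 4 * a₂ ≠ 0)
    (u : ℕ → ℤ) (hu0 : u 0 = 0) (hu1 : u 1 = 1)
    (hrec : ∀ n : ℕ, u (n + 2) = a₁ * u (n + 1) + a₂ * u n)
    (hnd : ∀ α β : ℂ, α ^ 2 = (a₁ : ℂ) * α + (a₂ : ℂ) →
      β ^ 2 = (a₁ : ℂ) * β + (a₂ : ℂ) → α ≠ β → ∀ k : ℕ, 0 < k → (α / β) ^ k ≠ 1) :
    (∀ ε : ℝ, 0 < ε → ε < 1 / 2 → ∃ lam₀ : ℕ, ∀ lam : ℕ, lam₀ ≤ lam →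
      (1 / 2 - ε) * (lam : ℝ) * (Nat.factorial (lam - 2) : ℝ) ≤
        ∑' n : ℕ, if 0 < n ∧ Int.gcd (n : ℤ) a₂ = 1 then
          rho lam n / (ellu u n : ℝ) else 0) ∧
    (∀ lam : ℕ, 0 < lam →
      (1 / 2 : ℝ) * (∑' q : ℕ, if q.Prime ∧ a₂.natAbs < q then
          Real.log (q : ℝ) ^ lam / (q : ℝ) ^ 2 else 0) ≤
        ∑' n : ℕ, if 0 < n ∧ Int.gcd (n : ℤ) a₂ = 1 then
          rho lam n / (ellu u n : ℝ) else 0) := by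
  exact ⟨fun ε h0 _ => M_large ha₂ hΔ hu0 hu1 hrec hnd ε h0,
    fun lam hl => M_ge_half ha₂ hΔ hu0 hu1 hrec hnd lam hl⟩
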